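/- For every integer N ≥ 1, the N×N matrices B_N and Λ_N satisfy the identity −(18/5)·B_N + (Λ_N²B_N + B_NΛ_N²) − 2Λ_N B_N Λ_N − (1/40)(Λ_N⁴B_N + B_NΛ_N⁴) + (1/10)(Λ_N³B_NΛ_N + Λ_N B_NΛ_N³) − (3/20)·Λ_N²B_NΛ_N² = 0, where 0 is the N×N zero matrix. -/

import Mathlib

open Real

/-- `α_m = (√2/3) √((m+3)(m-1)(m-2))`. -/
noncomputable def alphaCoeff (m : ℝ) : ℝ :=
  Real.sqrt 2 / 3 * Real.sqrt ((m + 3) * (m - 1) * (m - 2))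

/-- `β_m = √((m+1) m (m-2))`. -/
noncomputable def betaCoeff (m : ℝ) : ℝ :=
  Real.sqrt ((m + 1) * m * (m - 2))

/-- The enumeration `s_1 = 0`, `s_j = j + 1` for `j ≥ 2` of `{0, 3, 4, 5, …}`,
written with `0`-based indices `i = j - 1 : Fin N`. -/
def sIdx {N : ℕ} (i : Fin N) : ℕ := if (i : ℕ) = 0 then 0 else (i : ℕ) + 2

/-- The `N × N` truncation of the semi-infinite heptadiagonal recurrence matrix of the
orthonormal exceptional Hermite polynomials:
`(B_N)_{jk} = β_{s_j}` if `s_k = s_j + 1`, `(B_N)_{jk} = α_{s_j}` if `s_k = s_j + 3`,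
symmetric, and `0` otherwise. -/
noncomputable def BMat (N : ℕ) : Matrix (Fin N) (Fin N) ℝ := fun i k =>
  if sIdx k = sIdx i + 1 then betaCoeff (sIdx i)
  else if sIdx k = sIdx i + 3 then alphaCoeff (sIdx i)
  else if sIdx i = sIdx k + 1 then betaCoeff (sIdx k)
  else if sIdx i = sIdx k + 3 then alphaCoeff (sIdx k)
  else 0

/-- `Λ_N = diag(-2 s_1, …, -2 s_N) = diag(0, -6, -8, …, -2(N+1))`. -/
noncomputable def LamMat (N : ℕ) : Matrix (Fin N) (Fin N) ℝ :=
  Matrix.diagonal fun i => -2 * (sIdx i : ℝ)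

/-!
On a matrix, the commutator with `diagonal d` multiplies the `(i, k)` entry by `d i - d k`, so a
polynomial `p` in this commutator multiplies that entry by `p (d i - d k)`. The asserted relation is
`p (ad Λ) B = 0` for `p = -(1/40) (X² - 4) (X² - 36)`, with the powers of `ad Λ` multiplied out.
A nonzero entry of `B` has `s_i - s_k ∈ {±1, ±3}`, so that the corresponding difference of entries
of `Λ` is `±2` or `±6`, a root of `p`.
-/

section Ad

open Polynomial Matrix

attribute [local instance] LieRing.ofAssociativeRing LieAlgebra.ofAssociativeAlgebra

section AdDiagonal

variable {R n : Type*} [CommRing R] [Fintype n] [DecidableEq n]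

lemma lie_diagonal_apply (d : n → R) (M : Matrix n n R) (i k : n) :
    ⁅diagonal d, M⁆ i k = (d i - d k) * M i k := by
  rw [Ring.lie_def, Matrix.sub_apply, diagonal_mul, mul_diagonal]
  ring

lemma ad_diagonal_pow_apply (d : n → R) (m : ℕ) (M : Matrix n n R) (i k : n) :
    (LieAlgebra.ad R (Matrix n n R) (diagonal d) ^ m) M i k = (d i - d k) ^ m * M i k := by
  induction m with
  | zero => simp
  | succ m ih =>
    rw [pow_succ', Module.End.mul_apply, LieAlgebra.ad_apply, lie_diagonal_apply, ih, pow_succ',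
      mul_assoc]

lemma aeval_ad_diagonal_apply (d : n → R) (p : R[X]) (M : Matrix n n R) (i k : n) :
    aeval (LieAlgebra.ad R (Matrix n n R) (diagonal d)) p M i k = p.eval (d i - d k) * M i k := by
  induction p using Polynomial.induction_on' with
  | add p q hp hq =>
    rw [map_add, LinearMap.add_apply, Matrix.add_apply, hp, hq, eval_add, add_mul]
  | monomial m c =>
    rw [aeval_monomial, Module.End.mul_apply, Module.algebraMap_end_apply, Matrix.smul_apply,
      ad_diagonal_pow_apply, eval_monomial, smul_eq_mul, mul_assoc]

lemma aeval_ad_diagonal_eq_zero {d : n → R} {p : R[X]} {M : Matrix n n R}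
    (h : ∀ i k, M i k = 0 ∨ p.IsRoot (d i - d k)) :
    aeval (LieAlgebra.ad R (Matrix n n R) (diagonal d)) p M = 0 := by
  ext i k
  rw [aeval_ad_diagonal_apply, Matrix.zero_apply]
  rcases h i k with hM | hp
  · rw [hM, mul_zero]
  · rw [hp.eq_zero, zero_mul]

end AdDiagonal

section AdPow

variable (R : Type*) {A : Type*} [CommRing R] [Ring A] [Algebra R A]

lemma ad_sq_apply (a b : A) :
    (LieAlgebra.ad R A a ^ 2) b = a ^ 2 * b + b * a ^ 2 - (2 : R) • (a * b * a) := by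
  simp only [pow_two, Module.End.mul_apply, LieAlgebra.ad_apply, Ring.lie_def, ofNat_smul_eq_nsmul]
  noncomm_ring

lemma ad_pow_four_apply (a b : A) :
    (LieAlgebra.ad R A a ^ 4) b =
      a ^ 4 * b + b * a ^ 4 - (4 : R) • (a ^ 3 * b * a + a * b * a ^ 3)
        + (6 : R) • (a ^ 2 * b * a ^ 2) := by
  simp only [pow_succ, pow_zero, one_mul, Module.End.mul_apply, LieAlgebra.ad_apply, Ring.lie_def,
    ofNat_smul_eq_nsmul]
  noncomm_ring

end AdPow

section AdRelation

variable (K : Type*) [Field K]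

/-- The polynomial `p` for which the asserted relation reads `p (ad Λ) B = 0`. -/
noncomputable def adRelationPoly : K[X] :=
  -C (18 / 5) + X ^ 2 - C (1 / 40) * X ^ 4

variable {K} [CharZero K]

lemma eval_adRelationPoly (x : K) :
    (adRelationPoly K).eval x = -(1 / 40) * ((x ^ 2 - 4) * (x ^ 2 - 36)) := by
  simp only [adRelationPoly, eval_add, eval_sub, eval_neg, eval_mul, eval_pow, eval_C, eval_X]
  ring

lemma isRoot_adRelationPoly {x : K} (hx : x ^ 2 = 4 ∨ x ^ 2 = 36) :
    (adRelationPoly K).IsRoot x := by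
  rw [IsRoot.def, eval_adRelationPoly]
  rcases hx with hx | hx <;> simp [hx]

lemma aeval_ad_adRelationPoly {A : Type*} [Ring A] [Algebra K A] (a b : A) :
    aeval (LieAlgebra.ad K A a) (adRelationPoly K) b =
      -(18 / 5 : K) • b + (a ^ 2 * b + b * a ^ 2)
        - (2 : K) • (a * b * a)
        - (1 / 40 : K) • (a ^ 4 * b + b * a ^ 4)
        + (1 / 10 : K) • (a ^ 3 * b * a + a * b * a ^ 3)
        - (3 / 20 : K) • (a ^ 2 * b * a ^ 2) := by
  have aeval_eq : aeval (LieAlgebra.ad K A a) (adRelationPoly K) b =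
      -(18 / 5 : K) • b + (LieAlgebra.ad K A a ^ 2) b
        - (1 / 40 : K) • (LieAlgebra.ad K A a ^ 4) b := by
    simp [adRelationPoly]
  rw [aeval_eq, ad_sq_apply, ad_pow_four_apply]
  module

theorem hermite_ad_relation_general {n : Type*} [Fintype n] [DecidableEq n] (d : n → K)
    (M : Matrix n n K)
    (hM : ∀ i k, M i k = 0 ∨ (d i - d k) ^ 2 = 4 ∨ (d i - d k) ^ 2 = 36) :
    -(18 / 5 : K) • M + (diagonal d ^ 2 * M + M * diagonal d ^ 2)
      - (2 : K) • (diagonal d * M * diagonal d)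
      - (1 / 40 : K) • (diagonal d ^ 4 * M + M * diagonal d ^ 4)
      + (1 / 10 : K) • (diagonal d ^ 3 * M * diagonal d + diagonal d * M * diagonal d ^ 3)
      - (3 / 20 : K) • (diagonal d ^ 2 * M * diagonal d ^ 2) = 0 := by
  rw [← aeval_ad_adRelationPoly]
  exact aeval_ad_diagonal_eq_zero fun i k => (hM i k).imp_right isRoot_adRelationPoly

end AdRelation

end Ad

lemma BMat_apply_eq_zero_or_sq_sub_eq (N : ℕ) (i k : Fin N) :
    BMat N i k = 0 ∨ (-2 * (sIdx i : ℝ) - -2 * (sIdx k : ℝ)) ^ 2 = 4 ∨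
      (-2 * (sIdx i : ℝ) - -2 * (sIdx k : ℝ)) ^ 2 = 36 := by
  unfold BMat
  split_ifs with h₁ h₃ h₁' h₃'
  · right; left; rw [h₁]; push_cast; ring
  · right; right; rw [h₃]; push_cast; ring
  · right; left; rw [h₁']; push_cast; ring
  · right; right; rw [h₃']; push_cast; ring
  · exact Or.inl rfl

theorem hermite_ad_relation (N : ℕ) (hN : 1 ≤ N) :
    -(18 / 5 : ℝ) • BMat N + (LamMat N ^ 2 * BMat N + BMat N * LamMat N ^ 2)
      - (2 : ℝ) • (LamMat N * BMat N * LamMat N)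
      - (1 / 40 : ℝ) • (LamMat N ^ 4 * BMat N + BMat N * LamMat N ^ 4)
      + (1 / 10 : ℝ) • (LamMat N ^ 3 * BMat N * LamMat N + LamMat N * BMat N * LamMat N ^ 3)
      - (3 / 20 : ℝ) • (LamMat N ^ 2 * BMat N * LamMat N ^ 2) = 0 := by
  exact hermite_ad_relation_general _ _ (BMat_apply_eq_zero_or_sq_sub_eq N)
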